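/- arXiv:2307.14390 — 3 statements merged into one kernel-verified Lean document; each statement's English description precedes it below -/
import Mathlib

section
/- Let (Λ_j)_{j∈J} be a family of bounded operators Λ_j : H → V_j and let 0 < C ≤ D. The following are equivalent: (1) (Λ_j)_{j∈J} is a g-frame for H with bounds C, D, i.e. C·‖f‖² ≤ Σ_{j∈J} ‖Λ_j f‖² ≤ D·‖f‖² for all f ∈ H; (2) for every f ∈ H the series S f = Σ_{j∈J} Λ_j*(Λ_j f) converges in H and defines a bounded positive linear operator S on H satisfying C·‖f‖² ≤ ⟨S f, f⟩ ≤ D·‖f‖² for all f ∈ H (that is, C·Id ≤ S ≤ D·Id). -/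
/-!
If `∑ j, ‖Λ j f‖ ^ 2` is finite for every `f`, the closed graph theorem makes the analysis operator
`T f = (Λ j f)_j` bounded from `H` into the Hilbert sum `ℓ²(V)`, and `T†` sends the vector
concentrated at `j` with value `v` to `(Λ j)† v`. Since `T f` is the sum of its coordinates in
`ℓ²(V)`, applying the continuous map `T†` gives `T† (T f) = ∑ j, (Λ j)† (Λ j f)`, so `S = T† T` is
the positive operator required. The frame bounds carry over in both directions because pairing the
series with `f` gives `⟪S f, f⟫ = ∑ j, ‖Λ j f‖ ^ 2`.
-/

open scoped InnerProductSpace ENNReal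

lemma memℓp_two_iff_summable_norm_sq {J : Type*} {V : J → Type*}
    [∀ j, NormedAddCommGroup (V j)] {x : ∀ j, V j} :
    Memℓp x 2 ↔ Summable fun j => ‖x j‖ ^ 2 := by
  simp [memℓp_gen_iff]

section AnalysisOperator

variable {J 𝕜 E : Type*} [NontriviallyNormedField 𝕜]
  [NormedAddCommGroup E] [NormedSpace 𝕜 E] [CompleteSpace E]
  {V : J → Type*} [∀ j, NormedAddCommGroup (V j)] [∀ j, NormedSpace 𝕜 (V j)]
  [∀ j, CompleteSpace (V j)]
  {p : ℝ≥0∞} [Fact (1 ≤ p)]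

/-- The analysis operator `f ↦ (Λ j f)_j` of a family of bounded operators that is pointwise
`p`-summable, with values in the `ℓᵖ` direct sum; it is bounded by the closed graph
theorem. -/
noncomputable def analysisOperator (Λ : ∀ j, E →L[𝕜] V j)
    (hΛ : ∀ f, Memℓp (fun j => Λ j f) p) : E →L[𝕜] lp V p :=
  let T : E →ₗ[𝕜] lp V p :=
    { toFun f := ⟨fun j => Λ j f, hΛ f⟩
      map_add' f g := by ext j; exact map_add (Λ j) f g
      map_smul' c f := by ext j; exact map_smul (Λ j) c f }
  .ofSeqClosedGraph (g := T) fun u f y hu hTu => by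
    ext j
    exact tendsto_nhds_unique (((lp.evalCLM 𝕜 V p j).continuous.tendsto y).comp hTu)
      (((Λ j).continuous.tendsto f).comp hu)

@[simp]
lemma analysisOperator_apply (Λ : ∀ j, E →L[𝕜] V j) (hΛ : ∀ f, Memℓp (fun j => Λ j f) p)
    (f : E) (j : J) : analysisOperator Λ hΛ f j = Λ j f :=
  rfl

end AnalysisOperator

section FrameOperator

variable {J 𝕜 H : Type*} [RCLike 𝕜]
  [NormedAddCommGroup H] [InnerProductSpace 𝕜 H] [CompleteSpace H]
  {V : J → Type*} [∀ j, NormedAddCommGroup (V j)] [∀ j, InnerProductSpace 𝕜 (V j)]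
  [∀ j, CompleteSpace (V j)]
  (Λ : ∀ j, H →L[𝕜] V j)

lemma adjoint_analysisOperator_single [DecidableEq J] (hΛ : ∀ f, Memℓp (fun j => Λ j f) 2)
    (j : J) (v : V j) :
    (analysisOperator Λ hΛ).adjoint (lp.single 2 j v) = (Λ j).adjoint v := by
  refine ext_inner_right 𝕜 fun g => ?_
  rw [ContinuousLinearMap.adjoint_inner_left, lp.inner_single_left, analysisOperator_apply,
    ContinuousLinearMap.adjoint_inner_left]

/-- The g-frame operator of a pointwise square-summable family of bounded operators, encoded as
`T† T` for the analysis operator `T`; `hasSum_gFrameOperator` identifies it with the series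
`∑ j, (Λ j)† (Λ j f)`. -/
noncomputable def gFrameOperator (hΛ : ∀ f, Memℓp (fun j => Λ j f) 2) : H →L[𝕜] H :=
  (analysisOperator Λ hΛ).adjoint ∘L analysisOperator Λ hΛ

lemma isPositive_gFrameOperator (hΛ : ∀ f, Memℓp (fun j => Λ j f) 2) :
    (gFrameOperator Λ hΛ).IsPositive :=
  ContinuousLinearMap.isPositive_adjoint_comp_self _

lemma hasSum_gFrameOperator (hΛ : ∀ f, Memℓp (fun j => Λ j f) 2) (f : H) :
    HasSum (fun j => (Λ j).adjoint (Λ j f)) (gFrameOperator Λ hΛ f) := by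
  classical
  have hcoord : HasSum (fun j => lp.single 2 j (Λ j f)) (analysisOperator Λ hΛ f) :=
    lp.hasSum_single ENNReal.ofNat_ne_top (analysisOperator Λ hΛ f)
  simpa only [gFrameOperator, ContinuousLinearMap.comp_apply, adjoint_analysisOperator_single] using
    hcoord.mapL (analysisOperator Λ hΛ).adjoint

variable {Λ}

lemma hasSum_norm_sq_of_hasSum_adjoint_apply {f s : H}
    (h : HasSum (fun j => (Λ j).adjoint (Λ j f)) s) :
    HasSum (fun j => ‖Λ j f‖ ^ 2) (RCLike.re ⟪s, f⟫_𝕜) := by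
  rw [inner_re_symm]
  simpa only [innerSL_apply_apply, RCLike.reCLM_apply, ContinuousLinearMap.adjoint_inner_right,
    inner_self_eq_norm_sq] using (h.mapL (innerSL 𝕜 f)).mapL RCLike.reCLM

end FrameOperator

theorem soft_g_frame_iff_operator_general
    {J 𝕜 : Type*} [RCLike 𝕜]
    {H : Type*} [NormedAddCommGroup H] [InnerProductSpace 𝕜 H] [CompleteSpace H]
    {V : J → Type*} [∀ j, NormedAddCommGroup (V j)] [∀ j, InnerProductSpace 𝕜 (V j)]
    [∀ j, CompleteSpace (V j)]
    (Λ : ∀ j, H →L[𝕜] V j) (C D : ℝ) :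
    ((∀ f : H, Summable fun j => ‖Λ j f‖ ^ 2) ∧
      (∀ f : H, C * ‖f‖ ^ 2 ≤ ∑' j, ‖Λ j f‖ ^ 2 ∧ ∑' j, ‖Λ j f‖ ^ 2 ≤ D * ‖f‖ ^ 2)) ↔
    (∃ S : H →L[𝕜] H, S.IsPositive ∧
      (∀ f : H, HasSum (fun j => (Λ j).adjoint (Λ j f)) (S f)) ∧
      (∀ f : H, C * ‖f‖ ^ 2 ≤ RCLike.re ⟪S f, f⟫_𝕜 ∧
        RCLike.re ⟪S f, f⟫_𝕜 ≤ D * ‖f‖ ^ 2)) := by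
  constructor
  · rintro ⟨hsum, hbounds⟩
    have hΛ (f : H) : Memℓp (fun j => Λ j f) 2 := memℓp_two_iff_summable_norm_sq.2 (hsum f)
    have hS := hasSum_gFrameOperator Λ hΛ
    refine ⟨gFrameOperator Λ hΛ, isPositive_gFrameOperator Λ hΛ, hS, fun f => ?_⟩
    rw [← (hasSum_norm_sq_of_hasSum_adjoint_apply (hS f)).tsum_eq]
    exact hbounds f
  · rintro ⟨S, -, hS, hbounds⟩
    have hnorm (f : H) := hasSum_norm_sq_of_hasSum_adjoint_apply (hS f)
    refine ⟨fun f => (hnorm f).summable, fun f => ?_⟩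
    rw [(hnorm f).tsum_eq]
    exact hbounds f

/-- For a family of bounded operators `Λ j : H → V j` and `0 < C ≤ D`, the
following are equivalent: (1) `(Λ j)` is a g-frame for `H` with bounds `C, D`; (2) for every
`f` the series `S f = ∑ j, (Λ j)* (Λ j f)` converges and defines a bounded positive operator
`S` on `H` with `C • Id ≤ S ≤ D • Id`, i.e. `C·‖f‖² ≤ ⟨S f, f⟩ ≤ D·‖f‖²` for all `f`. -/
theorem soft_g_frame_iff_operator
    {J : Type*} [Countable J]
    {H : Type*} [NormedAddCommGroup H] [InnerProductSpace ℂ H] [CompleteSpace H]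
    {V : J → Type*} [∀ j, NormedAddCommGroup (V j)] [∀ j, InnerProductSpace ℂ (V j)]
    [∀ j, CompleteSpace (V j)]
    (Λ : ∀ j, H →L[ℂ] V j) (C D : ℝ) (hC : 0 < C) (hCD : C ≤ D) :
    ((∀ f : H, Summable fun j => ‖Λ j f‖ ^ 2) ∧
      (∀ f : H, C * ‖f‖ ^ 2 ≤ ∑' j, ‖Λ j f‖ ^ 2 ∧ ∑' j, ‖Λ j f‖ ^ 2 ≤ D * ‖f‖ ^ 2)) ↔
    (∃ S : H →L[ℂ] H, S.IsPositive ∧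
      (∀ f : H, HasSum (fun j => (Λ j).adjoint (Λ j f)) (S f)) ∧
      (∀ f : H, C * ‖f‖ ^ 2 ≤ (inner ℂ (S f) f : ℂ).re ∧
        (inner ℂ (S f) f : ℂ).re ≤ D * ‖f‖ ^ 2)) :=
  soft_g_frame_iff_operator_general Λ C D
end

section
/- Let (Λ_j)_{j∈J} be a g-frame for H with bounds C_Λ, D_Λ. Suppose for each j ∈ J the family (f_{j,k})_{k∈K_j} is a frame for V_j with bounds A_j, B_j, and there exist constants 0 < A ≤ B with A ≤ A_j ≤ B_j ≤ B for all j. Then the family (Λ_j* f_{j,k})_{j∈J, k∈K_j} is a frame for H with bounds A·C_Λ and B·D_Λ; that is, A·C_Λ·‖f‖² ≤ Σ_{j∈J} Σ_{k∈K_j} |⟨f, Λ_j* f_{j,k}⟩|² ≤ B·D_Λ·‖f‖² for all f ∈ H. -/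
/-!
Frames are the g-frames made of the functionals `⟪f i, ·⟫`, and `⟪(Λ j)* (F j k), ·⟫` is the
composite of `⟪F j k, ·⟫` with `Λ j`. The theorem is therefore an instance of the fact that g-frames
compose: if every `(Γ j k)_k` is a g-frame with bounds `A` and `B`, summing
`A * ‖Λ j f‖ ^ 2 ≤ ∑' k, ‖Γ j k (Λ j f)‖ ^ 2 ≤ B * ‖Λ j f‖ ^ 2` over `j` multiplies the bounds.
-/

section GFrame

variable {𝕜 : Type*} [NormedField 𝕜] {J : Type*}
  {H : Type*} [SeminormedAddCommGroup H] [NormedSpace 𝕜 H]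
  {V : J → Type*} [∀ j, SeminormedAddCommGroup (V j)] [∀ j, NormedSpace 𝕜 (V j)]
  {Λ : ∀ j, H →L[𝕜] V j} {A B C D : ℝ}

/-- The family of operators `Λ` is a g-frame with bounds `C` and `D`. Only norms enter the
definition, so the spaces need not carry inner products. Summability is a separate field because
`∑'` is `0` on divergent families. -/
structure IsGFrame (Λ : ∀ j, H →L[𝕜] V j) (C D : ℝ) : Prop where
  lower_pos : 0 < C
  lower_le_upper : C ≤ D
  summable (f : H) : Summable fun j => ‖Λ j f‖ ^ 2
  lower_bound (f : H) : C * ‖f‖ ^ 2 ≤ ∑' j, ‖Λ j f‖ ^ 2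
  upper_bound (f : H) : ∑' j, ‖Λ j f‖ ^ 2 ≤ D * ‖f‖ ^ 2

namespace IsGFrame

theorem mono (hΛ : IsGFrame Λ C D) (hA : 0 < A) (hAC : A ≤ C) (hDB : D ≤ B) :
    IsGFrame Λ A B where
  lower_pos := hA
  lower_le_upper := hAC.trans (hΛ.lower_le_upper.trans hDB)
  summable := hΛ.summable
  lower_bound f := (by gcongr : A * ‖f‖ ^ 2 ≤ C * ‖f‖ ^ 2).trans (hΛ.lower_bound f)
  upper_bound f := (hΛ.upper_bound f).trans (by gcongr)

variable {K : J → Type*} {W : ∀ j, K j → Type*}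
  [∀ j k, SeminormedAddCommGroup (W j k)] [∀ j k, NormedSpace 𝕜 (W j k)]
  {Γ : ∀ j k, V j →L[𝕜] W j k}

theorem summable_sigma_comp (hΛ : IsGFrame Λ C D) (hΓ : ∀ j, IsGFrame (Γ j) A B) (f : H) :
    Summable fun p : Σ j, K j => ‖Γ p.1 p.2 (Λ p.1 f)‖ ^ 2 := by
  refine (summable_sigma_of_nonneg fun p => sq_nonneg _).2
    ⟨fun j => (hΓ j).summable (Λ j f), ?_⟩
  exact .of_nonneg_of_le (fun j => tsum_nonneg fun k => sq_nonneg _)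
    (fun j => (hΓ j).upper_bound (Λ j f)) ((hΛ.summable f).mul_left B)

theorem sigma_comp (hΛ : IsGFrame Λ C D) (hA : 0 < A) (hAB : A ≤ B)
    (hΓ : ∀ j, IsGFrame (Γ j) A B) :
    IsGFrame (fun p : Σ j, K j => (Γ p.1 p.2).comp (Λ p.1)) (A * C) (B * D) where
  lower_pos := mul_pos hA hΛ.lower_pos
  lower_le_upper :=
    mul_le_mul hAB hΛ.lower_le_upper hΛ.lower_pos.le (hA.le.trans hAB)
  summable := hΛ.summable_sigma_comp hΓ
  lower_bound f := by
    have hsum := hΛ.summable_sigma_comp hΓ f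
    calc A * C * ‖f‖ ^ 2 = A * (C * ‖f‖ ^ 2) := mul_assoc ..
      _ ≤ A * ∑' j, ‖Λ j f‖ ^ 2 := by gcongr; exact hΛ.lower_bound f
      _ = ∑' j, A * ‖Λ j f‖ ^ 2 := tsum_mul_left.symm
      _ ≤ ∑' j, ∑' k, ‖Γ j k (Λ j f)‖ ^ 2 :=
        ((hΛ.summable f).mul_left A).tsum_le_tsum (fun j => (hΓ j).lower_bound (Λ j f)) hsum.sigma
      _ = ∑' p : Σ j, K j, ‖Γ p.1 p.2 (Λ p.1 f)‖ ^ 2 := hsum.tsum_sigma.symm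
  upper_bound f := by
    have hsum := hΛ.summable_sigma_comp hΓ f
    have hB : 0 ≤ B := hA.le.trans hAB
    calc ∑' p : Σ j, K j, ‖Γ p.1 p.2 (Λ p.1 f)‖ ^ 2
        = ∑' j, ∑' k, ‖Γ j k (Λ j f)‖ ^ 2 := hsum.tsum_sigma
      _ ≤ ∑' j, B * ‖Λ j f‖ ^ 2 :=
        hsum.sigma.tsum_le_tsum (fun j => (hΓ j).upper_bound (Λ j f)) ((hΛ.summable f).mul_left B)
      _ = B * ∑' j, ‖Λ j f‖ ^ 2 := tsum_mul_left
      _ ≤ B * (D * ‖f‖ ^ 2) := by gcongr; exact hΛ.upper_bound f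
      _ = B * D * ‖f‖ ^ 2 := (mul_assoc ..).symm

end IsGFrame

end GFrame

section Frame

open scoped InnerProductSpace

/-- The family of vectors `v` is a frame with bounds `A` and `B`; summability is a separate field,
as in `IsGFrame`. -/
structure IsFrame (𝕜 : Type*) [RCLike 𝕜] {I V : Type*} [SeminormedAddCommGroup V]
    [InnerProductSpace 𝕜 V] (v : I → V) (A B : ℝ) : Prop where
  lower_pos : 0 < A
  lower_le_upper : A ≤ B
  summable (g : V) : Summable fun i => ‖⟪g, v i⟫_𝕜‖ ^ 2
  lower_bound (g : V) : A * ‖g‖ ^ 2 ≤ ∑' i, ‖⟪g, v i⟫_𝕜‖ ^ 2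
  upper_bound (g : V) : ∑' i, ‖⟪g, v i⟫_𝕜‖ ^ 2 ≤ B * ‖g‖ ^ 2

variable {𝕜 : Type*} [RCLike 𝕜]

theorem isFrame_iff_isGFrame_innerSL {I V : Type*} [SeminormedAddCommGroup V]
    [InnerProductSpace 𝕜 V] {v : I → V} {A B : ℝ} :
    IsFrame 𝕜 v A B ↔ IsGFrame (fun i => innerSL 𝕜 (v i)) A B := by
  have norm_innerSL (g : V) (i : I) : ‖innerSL 𝕜 (v i) g‖ = ‖⟪g, v i⟫_𝕜‖ :=
    norm_inner_symm (v i) g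
  constructor <;> exact fun h =>
    ⟨h.lower_pos, h.lower_le_upper, by simpa only [norm_innerSL] using h.summable,
      by simpa only [norm_innerSL] using h.lower_bound,
      by simpa only [norm_innerSL] using h.upper_bound⟩

theorem soft_g_frame_comp_frame_is_frame_general
    {J : Type*} {K : J → Type*}
    {H : Type*} [NormedAddCommGroup H] [InnerProductSpace 𝕜 H] [CompleteSpace H]
    {V : J → Type*} [∀ j, NormedAddCommGroup (V j)] [∀ j, InnerProductSpace 𝕜 (V j)]
    [∀ j, CompleteSpace (V j)]
    {Λ : ∀ j, H →L[𝕜] V j} {C D : ℝ} (hΛ : IsGFrame Λ C D)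
    {F : ∀ j, K j → V j} {A B : ℝ} (hA : 0 < A) (hAB : A ≤ B) {a b : J → ℝ}
    (ha : ∀ j, A ≤ a j) (hb : ∀ j, b j ≤ B) (hF : ∀ j, IsFrame 𝕜 (F j) (a j) (b j)) :
    IsFrame 𝕜 (fun p : Σ j, K j => (Λ p.1).adjoint (F p.1 p.2)) (A * C) (B * D) := by
  have hΓ (j : J) : IsGFrame (fun k => innerSL 𝕜 (F j k)) A B :=
    (isFrame_iff_isGFrame_innerSL.1 (hF j)).mono hA (ha j) (hb j)
  simpa only [isFrame_iff_isGFrame_innerSL, ContinuousLinearMap.innerSL_apply_comp] using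
    hΛ.sigma_comp hA hAB hΓ

end Frame

/-- If `(Λ j)` is a g-frame for `H` with bounds `CΛ, DΛ`, and for each `j` the
family `(F j k)_{k}` is a frame for `V j` with bounds `Afam j, Bfam j` satisfying
`A ≤ Afam j ≤ Bfam j ≤ B` for fixed constants `0 < A ≤ B`, then `((Λ j)* (F j k))_{j,k}` is a
frame for `H` with bounds `A·CΛ` and `B·DΛ`. -/
theorem soft_g_frame_comp_frame_is_frame
    {J : Type*} [Countable J] {K : J → Type*} [∀ j, Countable (K j)]
    {H : Type*} [NormedAddCommGroup H] [InnerProductSpace ℂ H] [CompleteSpace H]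
    {V : J → Type*} [∀ j, NormedAddCommGroup (V j)] [∀ j, InnerProductSpace ℂ (V j)]
    [∀ j, CompleteSpace (V j)]
    (Λ : ∀ j, H →L[ℂ] V j) (CΛ DΛ : ℝ) (hCΛ : 0 < CΛ) (hCΛDΛ : CΛ ≤ DΛ)
    (hgSummable : ∀ f : H, Summable fun j => ‖Λ j f‖ ^ 2)
    (hgFrame : ∀ f : H,
      CΛ * ‖f‖ ^ 2 ≤ ∑' j, ‖Λ j f‖ ^ 2 ∧ ∑' j, ‖Λ j f‖ ^ 2 ≤ DΛ * ‖f‖ ^ 2)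
    (F : ∀ j, K j → V j) (A B : ℝ) (hA : 0 < A) (hAB : A ≤ B)
    (Afam Bfam : J → ℝ)
    (hbounds : ∀ j, A ≤ Afam j ∧ Afam j ≤ Bfam j ∧ Bfam j ≤ B)
    (hfSummable : ∀ (j : J) (g : V j), Summable fun k => ‖(inner ℂ g (F j k) : ℂ)‖ ^ 2)
    (hfFrame : ∀ (j : J) (g : V j),
      Afam j * ‖g‖ ^ 2 ≤ ∑' k, ‖(inner ℂ g (F j k) : ℂ)‖ ^ 2 ∧
      ∑' k, ‖(inner ℂ g (F j k) : ℂ)‖ ^ 2 ≤ Bfam j * ‖g‖ ^ 2) :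
    ∀ f : H,
      Summable (fun p : Σ j, K j => ‖(inner ℂ f ((Λ p.1).adjoint (F p.1 p.2)) : ℂ)‖ ^ 2) ∧
      A * CΛ * ‖f‖ ^ 2 ≤
        ∑' p : Σ j, K j, ‖(inner ℂ f ((Λ p.1).adjoint (F p.1 p.2)) : ℂ)‖ ^ 2 ∧
      ∑' p : Σ j, K j, ‖(inner ℂ f ((Λ p.1).adjoint (F p.1 p.2)) : ℂ)‖ ^ 2 ≤
        B * DΛ * ‖f‖ ^ 2 := by
  intro f
  have hΛ : IsGFrame Λ CΛ DΛ :=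
    ⟨hCΛ, hCΛDΛ, hgSummable, fun f => (hgFrame f).1, fun f => (hgFrame f).2⟩
  have hF (j : J) : IsFrame ℂ (F j) (Afam j) (Bfam j) :=
    ⟨hA.trans_le (hbounds j).1, (hbounds j).2.1, hfSummable j, fun g => (hfFrame j g).1,
      fun g => (hfFrame j g).2⟩
  have h := soft_g_frame_comp_frame_is_frame_general hΛ hA hAB (fun j => (hbounds j).1)
    (fun j => (hbounds j).2.2) hF
  exact ⟨h.summable f, h.lower_bound f, h.upper_bound f⟩
end

section
/- Let (Λ_j)_{j∈J} be a g-frame for H with bounds C, D and g-frame operator S (which is invertible). Then the family (Λ_j ∘ S⁻¹)_{j∈J} is a g-frame for H with respect to (V_j)_{j∈J} with bounds D⁻¹ and C⁻¹: D⁻¹·‖f‖² ≤ Σ_{j∈J} ‖Λ_j(S⁻¹ f)‖² ≤ C⁻¹·‖f‖² for every f ∈ H. Moreover its g-frame operator is S⁻¹, i.e. Σ_{j∈J} (Λ_j S⁻¹)*(Λ_j S⁻¹ f) = S⁻¹ f for every f ∈ H. -/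
/-!
The g-frame operator `S` is positive and satisfies `∑ j, ‖Λ j g‖ ^ 2 = ⟪S g, g⟫`, so the frame
bounds say `C ≤ S ≤ D` as quadratic forms. At `g = S⁻¹ f` the dual bounds become
`C * ⟪S g, g⟫ ≤ ‖S g‖ ^ 2 ≤ D * ⟪S g, g⟫`, which follow from the positivity of `‖S g - C g‖ ^ 2` and
of the form of `S` at `D g - S g`. Since `S⁻¹` is self-adjoint, the operator of the family
`Λ j ∘ S⁻¹` is `S⁻¹ S S⁻¹ = S⁻¹`.
-/

section GFrame

open ContinuousLinearMap RCLike
open scoped InnerProduct InnerProductSpace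

theorem mul_re_inner_le_norm_sq {𝕜 E : Type*} [RCLike 𝕜] [SeminormedAddCommGroup E]
    [InnerProductSpace 𝕜 E] {C : ℝ} (hC : 0 ≤ C) {x y : E}
    (h : C * ‖x‖ ^ 2 ≤ re ⟪y, x⟫_𝕜) : C * re ⟪y, x⟫_𝕜 ≤ ‖y‖ ^ 2 := by
  have expand : ‖y - (C : 𝕜) • x‖ ^ 2 =
      ‖y‖ ^ 2 - 2 * (C * re ⟪y, x⟫_𝕜) + C * (C * ‖x‖ ^ 2) := by
    rw [norm_sub_sq (𝕜 := 𝕜), inner_smul_right, re_ofReal_mul, norm_smul, norm_ofReal, mul_pow,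
      sq_abs]
    ring
  linarith [sq_nonneg ‖y - (C : 𝕜) • x‖, mul_le_mul_of_nonneg_left h hC]

theorem norm_map_sq_le_mul_re_inner {𝕜 E : Type*} [RCLike 𝕜] [NormedAddCommGroup E]
    [InnerProductSpace 𝕜 E] {T : E →ₗ[𝕜] E} (hT : T.IsPositive) {D : ℝ} (hD : 0 < D)
    (hTD : ∀ y, re ⟪T y, y⟫_𝕜 ≤ D * ‖y‖ ^ 2) (x : E) :
    ‖T x‖ ^ 2 ≤ D * re ⟪T x, x⟫_𝕜 := by
  have expand : re ⟪T ((D : 𝕜) • x - T x), (D : 𝕜) • x - T x⟫_𝕜 =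
      D * (D * re ⟪T x, x⟫_𝕜) - 2 * (D * ‖T x‖ ^ 2) + re ⟪T (T x), T x⟫_𝕜 := by
    have hsymm : ⟪T (T x), x⟫_𝕜 = ⟪T x, T x⟫_𝕜 := hT.isSymmetric (T x) x
    simp only [map_sub, map_smul, inner_sub_left, inner_sub_right, inner_smul_left,
      inner_smul_right, conj_ofReal, re_ofReal_mul, hsymm, inner_self_eq_norm_sq]
    ring
  have scaled : D * ‖T x‖ ^ 2 ≤ D * (D * re ⟪T x, x⟫_𝕜) := by
    linarith [hT.re_inner_nonneg_left ((D : 𝕜) • x - T x), hTD (T x)]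
  exact le_of_mul_le_mul_left scaled hD

variable {𝕜 J H : Type*} [RCLike 𝕜] [NormedAddCommGroup H] [InnerProductSpace 𝕜 H]
  {V : J → Type*} [∀ j, NormedAddCommGroup (V j)] [∀ j, InnerProductSpace 𝕜 (V j)]

/-- The family `Λ` is a g-frame for `H` with respect to `V`, with bounds `C` and `D`. Summability is
a separate field because `∑'` is `0` on families that are not summable. -/
structure IsGFrame_s12 (Λ : ∀ j, H →L[𝕜] V j) (C D : ℝ) : Prop where
  lower_pos : 0 < C
  lower_le_upper : C ≤ D
  summable : ∀ f, Summable fun j => ‖Λ j f‖ ^ 2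
  bounds : ∀ f, C * ‖f‖ ^ 2 ≤ ∑' j, ‖Λ j f‖ ^ 2 ∧ ∑' j, ‖Λ j f‖ ^ 2 ≤ D * ‖f‖ ^ 2

variable [CompleteSpace H] [∀ j, CompleteSpace (V j)]

/-- `S` is the g-frame operator `∑ j, (Λ j)† ∘ Λ j` of the family `Λ`, the sum being taken
pointwise. -/
def IsGFrameOperator (Λ : ∀ j, H →L[𝕜] V j) (S : H →L[𝕜] H) : Prop :=
  ∀ f, HasSum (fun j => (Λ j).adjoint (Λ j f)) (S f)

variable {Λ : ∀ j, H →L[𝕜] V j}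

namespace IsGFrameOperator

section Form

variable {S : H →L[𝕜] H}

theorem hasSum_inner_left (hS : IsGFrameOperator Λ S) (f g : H) :
    HasSum (fun j => ⟪Λ j f, Λ j g⟫_𝕜) ⟪S f, g⟫_𝕜 := by
  simpa only [innerSLFlip_apply_apply, adjoint_inner_left] using (innerSLFlip 𝕜 g).hasSum (hS f)

theorem hasSum_inner_right (hS : IsGFrameOperator Λ S) (f g : H) :
    HasSum (fun j => ⟪Λ j f, Λ j g⟫_𝕜) ⟪f, S g⟫_𝕜 := by
  simpa only [innerSL_apply_apply, adjoint_inner_right] using (innerSL 𝕜 f).hasSum (hS g)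

theorem hasSum_norm_sq (hS : IsGFrameOperator Λ S) (f : H) :
    HasSum (fun j => ‖Λ j f‖ ^ 2) (re ⟪S f, f⟫_𝕜) := by
  simpa only [inner_self_eq_norm_sq] using hasSum_re 𝕜 (hS.hasSum_inner_left f f)

theorem isPositive (hS : IsGFrameOperator Λ S) : S.IsPositive :=
  ⟨fun f g => (hS.hasSum_inner_left f g).unique (hS.hasSum_inner_right f g),
    fun f => (hS.hasSum_norm_sq f).nonneg fun _ => sq_nonneg _⟩

theorem comp {E : Type*} [NormedAddCommGroup E] [InnerProductSpace 𝕜 E] [CompleteSpace E]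
    (hS : IsGFrameOperator Λ S) (T : E →L[𝕜] H) :
    IsGFrameOperator (fun j => Λ j ∘L T) (T† ∘L S ∘L T) := fun f => by
  simpa only [adjoint_comp, comp_apply] using (T†).hasSum (hS (T f))

end Form

variable {S : H ≃L[𝕜] H}

theorem adjoint_symm (hS : IsGFrameOperator Λ (S : H →L[𝕜] H)) :
    (S.symm : H →L[𝕜] H)† = S.symm :=
  have hsymm : (S.symm : H →L[𝕜] H).IsSymmetric :=
    LinearMap.IsSymmetric.toLinearMap_symm (T := S.toLinearEquiv) hS.isPositive.isSymmetric
  hsymm.isSelfAdjoint.adjoint_eq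

theorem comp_symm (hS : IsGFrameOperator Λ (S : H →L[𝕜] H)) :
    IsGFrameOperator (fun j => Λ j ∘L (S.symm : H →L[𝕜] H)) (S.symm : H →L[𝕜] H) := by
  simpa only [hS.adjoint_symm, ContinuousLinearEquiv.coe_comp_coe_symm, comp_id] using
    hS.comp (S.symm : H →L[𝕜] H)

end IsGFrameOperator

theorem IsGFrame_s12.comp_symm {C D : ℝ} {S : H ≃L[𝕜] H} (hΛ : IsGFrame_s12 Λ C D)
    (hS : IsGFrameOperator Λ (S : H →L[𝕜] H)) :
    IsGFrame_s12 (fun j => Λ j ∘L (S.symm : H →L[𝕜] H)) D⁻¹ C⁻¹ where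
  lower_pos := inv_pos.2 (hΛ.lower_pos.trans_le hΛ.lower_le_upper)
  lower_le_upper := inv_anti₀ hΛ.lower_pos hΛ.lower_le_upper
  summable f := hΛ.summable (S.symm f)
  bounds f := by
    have hD : 0 < D := hΛ.lower_pos.trans_le hΛ.lower_le_upper
    have tsum_eq (g : H) : ∑' j, ‖Λ j g‖ ^ 2 = re ⟪S g, g⟫_𝕜 := (hS.hasSum_norm_sq g).tsum_eq
    have form_bounds (g : H) : C * ‖g‖ ^ 2 ≤ re ⟪S g, g⟫_𝕜 ∧ re ⟪S g, g⟫_𝕜 ≤ D * ‖g‖ ^ 2 :=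
      tsum_eq g ▸ hΛ.bounds g
    obtain ⟨g, rfl⟩ := S.surjective f
    simp only [comp_apply, ContinuousLinearEquiv.coe_coe, S.symm_apply_apply, tsum_eq]
    rw [inv_mul_le_iff₀ hD, le_inv_mul_iff₀ hΛ.lower_pos]
    exact ⟨norm_map_sq_le_mul_re_inner hS.isPositive hD (fun y => (form_bounds y).2) g,
      mul_re_inner_le_norm_sq hΛ.lower_pos.le (form_bounds g).1⟩

theorem soft_dual_g_frame_general {C D : ℝ} {S : H ≃L[𝕜] H} (hΛ : IsGFrame_s12 Λ C D)
    (hS : IsGFrameOperator Λ (S : H →L[𝕜] H)) :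
    IsGFrame_s12 (fun j => Λ j ∘L (S.symm : H →L[𝕜] H)) D⁻¹ C⁻¹ ∧
      IsGFrameOperator (fun j => Λ j ∘L (S.symm : H →L[𝕜] H)) (S.symm : H →L[𝕜] H) :=
  ⟨hΛ.comp_symm hS, hS.comp_symm⟩

end GFrame

/-- If `(Λ j)` is a g-frame for `H` with bounds `C, D` and (invertible)
g-frame operator `S`, then `(Λ j ∘ S⁻¹)` is a g-frame for `H` with bounds `D⁻¹, C⁻¹`, and its
g-frame operator is `S⁻¹`: `∑ j, (Λ j ∘ S⁻¹)* ((Λ j ∘ S⁻¹) f) = S⁻¹ f` for every `f`. -/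
theorem soft_dual_g_frame
    {J : Type*} [Countable J]
    {H : Type*} [NormedAddCommGroup H] [InnerProductSpace ℂ H] [CompleteSpace H]
    {V : J → Type*} [∀ j, NormedAddCommGroup (V j)] [∀ j, InnerProductSpace ℂ (V j)]
    [∀ j, CompleteSpace (V j)]
    (Λ : ∀ j, H →L[ℂ] V j) (C D : ℝ) (hC : 0 < C) (hCD : C ≤ D)
    (hSummable : ∀ f : H, Summable fun j => ‖Λ j f‖ ^ 2)
    (hFrame : ∀ f : H,
      C * ‖f‖ ^ 2 ≤ ∑' j, ‖Λ j f‖ ^ 2 ∧ ∑' j, ‖Λ j f‖ ^ 2 ≤ D * ‖f‖ ^ 2)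
    (S : H ≃L[ℂ] H)
    (hS : ∀ f : H, HasSum (fun j => (Λ j).adjoint (Λ j f)) (S f)) :
    (∀ f : H, Summable fun j => ‖Λ j (S.symm f)‖ ^ 2) ∧
    (∀ f : H,
      D⁻¹ * ‖f‖ ^ 2 ≤ ∑' j, ‖Λ j (S.symm f)‖ ^ 2 ∧
      ∑' j, ‖Λ j (S.symm f)‖ ^ 2 ≤ C⁻¹ * ‖f‖ ^ 2) ∧
    (∀ f : H, HasSum
      (fun j => (ContinuousLinearMap.adjoint ((Λ j).comp (S.symm : H →L[ℂ] H)))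
        (((Λ j).comp (S.symm : H →L[ℂ] H)) f))
      (S.symm f)) := by
  obtain ⟨hdual, hop⟩ := soft_dual_g_frame_general (S := S) ⟨hC, hCD, hSummable, hFrame⟩ hS
  exact ⟨hdual.summable, hdual.bounds, hop⟩
end
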